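/- Let d ≥ 2. For every unimodular lattice Λ ⊆ K̃^d there exists a = (a₁,…,a_d) ∈ ℤ^d with a₁ + … + a_d = 0 such that the lattice diag(x^{a₁},…,x^{a_d})·Λ is well rounded. -/

import Mathlib

noncomputable section

open scoped Classical

variable (Fq : Type) [Field Fq] [Fintype Fq]

/-- `K̃ = 𝔽_q((x⁻¹))`, realized as formal Laurent series in `t = x⁻¹`. -/
abbrev Kt := LaurentSeries Fq

/-- The element `x` of `K̃` (the inverse of the Laurent series variable). -/
def Kx : Kt Fq := HahnSeries.single (-1 : ℤ) 1

/-- Absolute value `|f| = q^{deg f}`, i.e. `q^{-order f}` in terms of `t = x⁻¹`. -/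
def Kabs (f : Kt Fq) : ℝ := if f = 0 then 0 else (Fintype.card Fq : ℝ) ^ (-f.order)

/-- The ring embedding of `R = 𝔽_q[x]` into `K̃`. -/
def polyK : Polynomial Fq →+* Kt Fq := (Polynomial.aeval (Kx Fq)).toRingHom

/-- Sup norm on `K̃^d`. -/
def vnorm {d : ℕ} (v : Fin d → Kt Fq) : ℝ := ⨆ i, Kabs Fq (v i)

/-- The lattice `g·R^d`. -/
def lattice {d : ℕ} (g : Matrix (Fin d) (Fin d) (Kt Fq)) : Set (Fin d → Kt Fq) :=
  {v | ∃ c : Fin d → Polynomial Fq, v = g.mulVec fun j => polyK Fq (c j)}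

/-- `i`-th successive minimum of `Λ` with respect to a norm `nrm`: the least `r > 0` such that
`Λ` contains `i` linearly independent vectors of norm at most `r`. -/
def minimaN {d : ℕ} (nrm : (Fin d → Kt Fq) → ℝ) (Λ : Set (Fin d → Kt Fq)) (i : ℕ) : ℝ :=
  sInf {r : ℝ | 0 < r ∧ ∃ v : Fin i → Fin d → Kt Fq,
    (∀ j, v j ∈ Λ) ∧ LinearIndependent (Kt Fq) v ∧ ∀ j, nrm (v j) ≤ r}

/-- `i`-th successive minimum with respect to the sup norm. -/
def minima {d : ℕ} (Λ : Set (Fin d → Kt Fq)) (i : ℕ) : ℝ := minimaN Fq (vnorm Fq) Λ i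

/-- Covering radius of `Λ` with respect to the norm `nrm`. -/
def covRad {d : ℕ} (nrm : (Fin d → Kt Fq) → ℝ) (Λ : Set (Fin d → Kt Fq)) : ℝ :=
  ⨆ w : Fin d → Kt Fq, ⨅ u : Λ, nrm (w - u.1)

/-- Length of the shortest nonzero vector of `Λ`. -/
def ell {d : ℕ} (Λ : Set (Fin d → Kt Fq)) : ℝ :=
  sInf {r : ℝ | ∃ v ∈ Λ, v ≠ 0 ∧ vnorm Fq v = r}

/-- `Λ` is well rounded: it contains `d` linearly independent vectors of norm `ℓ(Λ)`. -/
def IsWellRounded {d : ℕ} (Λ : Set (Fin d → Kt Fq)) : Prop :=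
  ∃ v : Fin d → Fin d → Kt Fq, (∀ j, v j ∈ Λ) ∧ LinearIndependent (Kt Fq) v ∧
    ∀ j, vnorm Fq (v j) = ell Fq Λ

/-- The multiplicative "norm" `N(v) = ∏ |v i|`. -/
def Nprod {d : ℕ} (v : Fin d → Kt Fq) : ℝ := ∏ i, Kabs Fq (v i)

/-- The Minkowski function `μ(Λ) = sup_w inf_{u ∈ Λ} N(w - u)`. -/
def mink {d : ℕ} (Λ : Set (Fin d → Kt Fq)) : ℝ :=
  ⨆ w : Fin d → Kt Fq, ⨅ u : Λ, Nprod Fq (w - u.1)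

/-!
Among the `a ∈ ℤ^d` for which `diag(x^a)Λ` contains `d` independent vectors of norm at most `1`,
take one with `∑ aᵢ` maximal; comparing determinants shows that `∑ aᵢ` is bounded on this set.
Every element of `K̃` is a polynomial plus an element of absolute value less than `1`, so rounding
the inverse of the matrix formed by the `d` vectors to polynomials turns them into the columns of a
matrix `W` congruent to `1` modulo `{|f| < 1}`. If `diag(x^a)Λ` contained a nonzero vector of norm
less than `1`, putting it in place of a suitable column `j` of `W` would keep the columns
independent and make the `j`-th coordinate of each of them smaller than `1`; then `aⱼ` could be
increased. Hence the columns of `W` are shortest vectors. They also generate `diag(x^a)Λ`, because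
rounding the coordinates of a lattice vector with respect to `W` leaves a lattice vector of norm
less than `1`. As `|det W| = 1`, the covolume `q^{∑ aᵢ}` of `diag(x^a)Λ` is `1`.
-/

open Matrix Polynomial WithZero

lemma exists_det_updateCol_ne_zero {ι R : Type*} [Fintype ι] [DecidableEq ι] [CommRing R]
    [NoZeroDivisors R] {C : Matrix ι ι R} (hC : C.det ≠ 0) {b : ι → R} (hb : b ≠ 0) :
    ∃ j, (C.updateCol j b).det ≠ 0 := by
  by_contra! hdet
  have hcramer : C.cramer b = 0 := funext hdet
  have hsmul : C.det • b = 0 := by rw [← mulVec_cramer, hcramer, mulVec_zero]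
  exact (smul_eq_zero.1 hsmul).elim hC hb

lemma valuation_mul_apply_lt_one {l m n R Γ₀ : Type*} [Fintype m] [Ring R]
    [LinearOrderedCommGroupWithZero Γ₀] (v : Valuation R Γ₀) {A : Matrix l m R} {B : Matrix m n R}
    (hA : ∀ i j, v (A i j) ≤ 1) (hB : ∀ i j, v (B i j) < 1) (i : l) (j : n) :
    v ((A * B) i j) < 1 := by
  rw [mul_apply]
  refine v.map_sum_lt' one_pos fun k _ => ?_
  rw [map_mul]
  exact mul_lt_one_of_nonneg_of_lt_one_right (hA i k) zero_le (hB k j)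

section Valuation

variable {ι R Γ₀ : Type*} [DecidableEq ι] [CommRing R] [LinearOrderedCommGroupWithZero Γ₀]
  (v : Valuation R Γ₀)

lemma valuation_det_le_one [Fintype ι] {M : Matrix ι ι R} (hM : ∀ i j, v (M i j) ≤ 1) :
    v M.det ≤ 1 := by
  let N : Matrix ι ι v.integer := fun i j => ⟨M i j, hM i j⟩
  have hN : v.integer.subtype N.det = M.det := v.integer.subtype.map_det N
  exact hN ▸ N.det.2

/-- The congruence `M ≡ 1` modulo the ideal `{v < 1}` of the ring `{v ≤ 1}`. -/
def IsCongrOne (M : Matrix ι ι R) : Prop := ∀ i j, v ((M - 1) i j) < 1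

variable {v} {M : Matrix ι ι R}

lemma IsCongrOne.valuation_diag_eq_one (hM : IsCongrOne v M) (i : ι) : v (M i i) = 1 := by
  have h : v (M i i - 1) < v 1 := by simpa using hM i i
  rw [v.map_eq_of_sub_lt h, map_one]

lemma IsCongrOne.valuation_apply_lt_one (hM : IsCongrOne v M) {i j : ι} (hij : i ≠ j) :
    v (M i j) < 1 := by
  simpa [hij] using hM i j

lemma IsCongrOne.valuation_apply_le_one (hM : IsCongrOne v M) (i j : ι) : v (M i j) ≤ 1 := by
  rcases eq_or_ne i j with rfl | hij
  · exact (hM.valuation_diag_eq_one i).le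
  · exact (hM.valuation_apply_lt_one hij).le

lemma IsCongrOne.valuation_updateCol_apply_le_one (hM : IsCongrOne v M) {u : ι → R}
    (hu : ∀ i, v (u i) ≤ 1) (j i k : ι) : v (M.updateCol j u i k) ≤ 1 := by
  rcases eq_or_ne k j with rfl | hkj
  · rw [updateCol_self]
    exact hu i
  · rw [updateCol_ne hkj]
    exact hM.valuation_apply_le_one i k

lemma IsCongrOne.valuation_updateCol_apply_lt_one (hM : IsCongrOne v M) {u : ι → R} {j : ι}
    (hu : v (u j) < 1) (k : ι) : v (M.updateCol j u j k) < 1 := by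
  rcases eq_or_ne k j with rfl | hkj
  · rwa [updateCol_self]
  · rw [updateCol_ne hkj]
    exact hM.valuation_apply_lt_one hkj.symm

lemma IsCongrOne.valuation_det_eq_one [Fintype ι] (hM : IsCongrOne v M) : v M.det = 1 := by
  let N : Matrix ι ι v.integer := fun i j => ⟨M i j, hM.valuation_apply_le_one i j⟩
  let π := Ideal.Quotient.mk (v.ltIdeal 1)
  have hN : v.integer.subtype N.det = M.det := v.integer.subtype.map_det N
  have hπN : π.mapMatrix N = π.mapMatrix 1 := by
    ext i j
    refine Ideal.Quotient.eq.2 (v.mem_ltIdeal_iff.2 ?_)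
    have h : ((1 : Matrix ι ι v.integer) i j : R) = (1 : Matrix ι ι R) i j := by
      rw [one_apply, one_apply]
      split_ifs <;> rfl
    change v ((N i j : R) - (1 : Matrix ι ι v.integer) i j) < 1
    rw [h]
    exact hM i j
  have hdet : N.det - 1 ∈ v.ltIdeal 1 := by
    rw [← Ideal.Quotient.eq]
    change π N.det = π 1
    rw [RingHom.map_det, hπN, map_one, det_one, map_one]
  have hlt : v (M.det - 1) < v 1 := by
    simpa [← hN] using v.mem_ltIdeal_iff.1 hdet
  rw [v.map_eq_of_sub_lt hlt, map_one]

end Valuation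

section LaurentSeries

variable {F : Type} [Field F]

lemma lt_exp_iff_le_exp_sub_one {x : ℤᵐ⁰} {n : ℤ} : x < exp n ↔ x ≤ exp (n - 1) := by
  rw [← lt_mul_exp_iff_le exp_ne_zero, ← exp_add, sub_add_cancel]

lemma valuation_lt_one_iff {f : Kt F} : Valued.v f < 1 ↔ ∀ n ≤ 0, f.coeff n = 0 := by
  rw [← exp_zero, lt_exp_iff_le_exp_sub_one, zero_sub,
    LaurentSeries.valuation_le_iff_coeff_lt_eq_zero]
  exact forall_congr' fun n => imp_congr_left (by lia)

lemma valuation_eq_exp_neg_order {f : Kt F} (hf : f ≠ 0) : Valued.v f = exp (-f.order) := by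
  refine le_antisymm ?_ (not_lt.1 fun hlt => ?_)
  · rw [LaurentSeries.valuation_le_iff_coeff_lt_eq_zero]
    exact fun n hn => HahnSeries.coeff_eq_zero_of_lt_order hn
  · rw [lt_exp_iff_le_exp_sub_one, ← neg_add',
      LaurentSeries.valuation_le_iff_coeff_lt_eq_zero] at hlt
    exact HahnSeries.coeff_order_eq_zero.not.2 hf (hlt _ (lt_add_one _))

lemma Kx_ne_zero : Kx F ≠ 0 := HahnSeries.single_ne_zero one_ne_zero

lemma valuation_Kx_zpow (n : ℤ) : Valued.v (Kx F ^ n) = exp n := by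
  rw [map_zpow₀, Kx, LaurentSeries.valuation_single_zpow, ← WithZero.exp_zsmul]
  simp

lemma polyK_monomial (n : ℕ) (r : F) :
    polyK F (monomial n r) = HahnSeries.single (-(n : ℤ)) r := by
  change aeval (Kx F) (monomial n r) = _
  simp [aeval_monomial, Kx, HahnSeries.algebraMap_apply', HahnSeries.single_pow]

lemma coeff_polyK (p : F[X]) (n : ℕ) : (polyK F p).coeff (-(n : ℤ)) = p.coeff n := by
  induction p using Polynomial.induction_on' with
  | add p q hp hq => simp [hp, hq]
  | monomial k r => simp [polyK_monomial, HahnSeries.coeff_single, coeff_monomial, eq_comm]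

lemma one_le_valuation_polyK {p : F[X]} (hp : p ≠ 0) : 1 ≤ Valued.v (polyK F p) := by
  contrapose! hp
  ext n
  rw [← coeff_polyK, valuation_lt_one_iff.1 hp _ (by lia), coeff_zero]

lemma polyK_ne_zero {p : F[X]} (hp : p ≠ 0) : polyK F p ≠ 0 := by
  intro h0
  simpa [h0] using one_le_valuation_polyK hp

lemma valuation_polyK_eq_one {p : F[X]} (hp : IsUnit p) : Valued.v (polyK F p) = 1 := by
  obtain ⟨u, rfl⟩ := hp
  refine le_antisymm ?_ (one_le_valuation_polyK u.ne_zero)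
  calc Valued.v (polyK F u) ≤ Valued.v (polyK F u) * Valued.v (polyK F ↑u⁻¹) :=
        le_mul_of_one_le_right' (one_le_valuation_polyK u⁻¹.ne_zero)
    _ = 1 := by rw [← map_mul, ← map_mul, u.mul_inv, map_one, map_one]

lemma exists_valuation_sub_polyK_lt_one (f : Kt F) :
    ∃ p : F[X], Valued.v (f - polyK F p) < 1 := by
  refine ⟨∑ n ∈ Finset.range (f.order.natAbs + 1), monomial n (f.coeff (-(n : ℤ))), ?_⟩
  refine valuation_lt_one_iff.2 fun m hm => ?_
  obtain ⟨n, rfl⟩ : ∃ n : ℕ, m = -(n : ℤ) := ⟨m.natAbs, by lia⟩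
  rw [HahnSeries.coeff_sub, coeff_polyK, finsetSum_coeff, sub_eq_zero]
  simp only [coeff_monomial, Finset.sum_ite_eq', Finset.mem_range]
  split_ifs with h
  · rfl
  · exact HahnSeries.coeff_eq_zero_of_lt_order (by lia)

end LaurentSeries

section Lattice

variable {ι F : Type} [Field F]

lemma exists_valuation_sub_map_polyK_lt_one {m n : Type} (A : Matrix m n (Kt F)) :
    ∃ P : Matrix m n F[X], ∀ i j, Valued.v ((A - P.map (polyK F)) i j) < 1 := by
  choose P hP using fun i j => exists_valuation_sub_polyK_lt_one (A i j)
  exact ⟨P, hP⟩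

variable [Fintype ι]

/-- `λ₁(hR^d) ≥ 1`: the lattice `hR^d` has no nonzero vector of norm less than `1`. Vanishing is
required of the coordinate vector `b`, so `h` is in particular injective on `R^d`. -/
def OneLEFirstMin (h : Matrix ι ι (Kt F)) : Prop :=
  ∀ b : ι → F[X], (∀ i, Valued.v ((h *ᵥ (polyK F ∘ b)) i) < 1) → b = 0

lemma OneLEFirstMin.eq_zero {h : Matrix ι ι (Kt F)} (hh : OneLEFirstMin h) {B : Matrix ι ι F[X]}
    (hB : ∀ i j, Valued.v ((h * B.map (polyK F)) i j) < 1) : B = 0 := by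
  ext1 i j
  exact congrFun (hh (fun k => B k j) fun i => hB i j) i

variable [DecidableEq ι]

/-- `λ_d(hR^d) ≤ 1` for invertible `h`: the lattice `hR^d` contains `d` linearly independent
vectors of norm at most `1`, namely the columns of `hC`. -/
def LastMinLEOne (h : Matrix ι ι (Kt F)) : Prop :=
  ∃ C : Matrix ι ι F[X], C.det ≠ 0 ∧ ∀ i j, Valued.v ((h * C.map (polyK F)) i j) ≤ 1

lemma det_mul_map_polyK (h : Matrix ι ι (Kt F)) (C : Matrix ι ι F[X]) :
    (h * C.map (polyK F)).det = h.det * polyK F C.det := by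
  rw [det_mul, RingHom.map_det, RingHom.mapMatrix_apply]

lemma exists_isCongrOne_mul_map_polyK {h : Matrix ι ι (Kt F)} (hdet : h.det ≠ 0)
    (hle : ∀ i j, Valued.v (h i j) ≤ 1) :
    ∃ P : Matrix ι ι F[X], IsCongrOne Valued.v (h * P.map (polyK F)) := by
  obtain ⟨P, hP⟩ := exists_valuation_sub_map_polyK_lt_one h⁻¹
  have hsub : h * P.map (polyK F) - 1 = -(h * (h⁻¹ - P.map (polyK F))) := by
    rw [mul_sub, mul_nonsing_inv h hdet.isUnit, neg_sub]
  refine ⟨P, fun i j => ?_⟩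
  rw [hsub, neg_apply, Valuation.map_neg]
  exact valuation_mul_apply_lt_one _ hle hP i j

lemma LastMinLEOne.exists_isCongrOne {h : Matrix ι ι (Kt F)} (hh : LastMinLEOne h)
    (hdet : h.det ≠ 0) : ∃ C : Matrix ι ι F[X], IsCongrOne Valued.v (h * C.map (polyK F)) := by
  obtain ⟨C, hC, hle⟩ := hh
  have hCdet : (h * C.map (polyK F)).det ≠ 0 := by
    rw [det_mul_map_polyK]
    exact mul_ne_zero hdet (polyK_ne_zero hC)
  obtain ⟨P, hP⟩ := exists_isCongrOne_mul_map_polyK hCdet hle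
  exact ⟨C * P, by rwa [Matrix.map_mul, ← mul_assoc]⟩

lemma LastMinLEOne.valuation_det_le_one {h : Matrix ι ι (Kt F)} (hh : LastMinLEOne h) :
    Valued.v h.det ≤ 1 := by
  obtain ⟨C, hC, hle⟩ := hh
  calc Valued.v h.det ≤ Valued.v h.det * Valued.v (polyK F C.det) :=
        le_mul_of_one_le_right' (one_le_valuation_polyK hC)
    _ = Valued.v (h * C.map (polyK F)).det := by rw [det_mul_map_polyK, map_mul]
    _ ≤ 1 := _root_.valuation_det_le_one _ hle

lemma IsCongrOne.det_right_ne_zero {h : Matrix ι ι (Kt F)} {C : Matrix ι ι F[X]}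
    (hC : IsCongrOne Valued.v (h * C.map (polyK F))) : C.det ≠ 0 := by
  have hdet := hC.valuation_det_eq_one
  contrapose! hdet
  simp [det_mul_map_polyK, hdet, -det_mul]

lemma OneLEFirstMin.isUnit_det {h : Matrix ι ι (Kt F)} (hh : OneLEFirstMin h)
    {C : Matrix ι ι F[X]} (hC : IsCongrOne Valued.v (h * C.map (polyK F))) : IsUnit C.det := by
  have hCdet : IsUnit (C.map (polyK F)).det := by
    rw [← RingHom.mapMatrix_apply, ← RingHom.map_det]
    exact (polyK_ne_zero hC.det_right_ne_zero).isUnit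
  obtain ⟨P, hP⟩ := exists_valuation_sub_map_polyK_lt_one (C.map (polyK F))⁻¹
  have hshort : h * (1 - C * P).map (polyK F)
      = h * C.map (polyK F) * ((C.map (polyK F))⁻¹ - P.map (polyK F)) := by
    rw [mul_assoc, mul_sub (C.map _), mul_nonsing_inv _ hCdet, Matrix.map_sub _ (map_sub _),
      Matrix.map_one _ (map_zero _) (map_one _), Matrix.map_mul]
  have hCP : 1 - C * P = 0 := hh.eq_zero fun i j => by
    rw [hshort]
    exact valuation_mul_apply_lt_one _ hC.valuation_apply_le_one hP i j
  exact isUnit_det_of_right_inverse (sub_eq_zero.1 hCP).symm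

lemma OneLEFirstMin.valuation_det_eq_one {h : Matrix ι ι (Kt F)} (hh : OneLEFirstMin h)
    {C : Matrix ι ι F[X]} (hC : IsCongrOne Valued.v (h * C.map (polyK F))) :
    Valued.v h.det = 1 := by
  have hdet := hC.valuation_det_eq_one
  rwa [det_mul_map_polyK, map_mul, valuation_polyK_eq_one (hh.isUnit_det hC), mul_one] at hdet

/-- The diagonal matrix `diag(x^{a₁}, …, x^{a_d})`. -/
def diagX (F : Type) [Field F] (a : ι → ℤ) : Matrix ι ι (Kt F) := diagonal fun i => Kx F ^ a i

lemma diagX_add (a b : ι → ℤ) : diagX F (a + b) = diagX F a * diagX F b := by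
  simp [diagX, zpow_add₀ Kx_ne_zero]

lemma valuation_diagX_mul_apply (a : ι → ℤ) (M : Matrix ι ι (Kt F)) (i j : ι) :
    Valued.v ((diagX F a * M) i j) = exp (a i) * Valued.v (M i j) := by
  rw [diagX, diagonal_mul, map_mul, valuation_Kx_zpow]

lemma valuation_det_diagX (a : ι → ℤ) : Valued.v (diagX F a).det = exp (∑ i, a i) := by
  rw [diagX, det_diagonal, map_prod]
  simp only [valuation_Kx_zpow]
  induction (Finset.univ : Finset ι) using Finset.cons_induction with
  | empty => simp
  | cons i s hi ih => rw [Finset.prod_cons, Finset.sum_cons, ih, WithZero.exp_add]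

lemma exists_lastMinLEOne_diagX_mul (g : Matrix ι ι (Kt F)) :
    ∃ a : ι → ℤ, LastMinLEOne (diagX F a * g) := by
  obtain ⟨N, hN⟩ := (Set.finite_range fun p : ι × ι => log (Valued.v (g p.1 p.2))).bddAbove
  refine ⟨fun _ => -N, 1, by simp, fun i j => ?_⟩
  have hle : Valued.v (g i j) ≤ exp N := le_exp_of_log_le (hN ⟨(i, j), rfl⟩)
  rw [Matrix.map_one _ (map_zero _) (map_one _), mul_one, valuation_diagX_mul_apply]
  calc exp (-N) * Valued.v (g i j)
    _ ≤ exp (-N) * exp N := by gcongr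
    _ = 1 := by rw [← WithZero.exp_add, neg_add_cancel, exp_zero]

lemma IsCongrOne.exists_lastMinLEOne_diagX_mul {h : Matrix ι ι (Kt F)} {C : Matrix ι ι F[X]}
    (hC : IsCongrOne Valued.v (h * C.map (polyK F))) (hh : ¬ OneLEFirstMin h) :
    ∃ j, LastMinLEOne (diagX F (Pi.single j 1) * h) := by
  obtain ⟨b, hb, hb0⟩ : ∃ b : ι → F[X],
      (∀ i, Valued.v ((h *ᵥ (polyK F ∘ b)) i) < 1) ∧ b ≠ 0 := by
    simpa [OneLEFirstMin] using hh
  obtain ⟨j, hj⟩ := exists_det_updateCol_ne_zero hC.det_right_ne_zero hb0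
  refine ⟨j, C.updateCol j b, hj, fun i k => ?_⟩
  have hcol : h * (C.updateCol j b).map (polyK F)
      = (h * C.map (polyK F)).updateCol j (h *ᵥ (polyK F ∘ b)) := by
    rw [map_updateCol, mul_updateCol]
  rw [mul_assoc, valuation_diagX_mul_apply, hcol]
  rcases eq_or_ne i j with rfl | hij
  · have hlt := hC.valuation_updateCol_apply_lt_one (hb i) k
    rw [← exp_zero, lt_exp_iff_le_exp_sub_one] at hlt
    rw [Pi.single_eq_same]
    calc exp (1 : ℤ) * _ ≤ exp 1 * exp (0 - 1) := by gcongr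
      _ = 1 := by rw [← WithZero.exp_add, add_sub_cancel, exp_zero]
  · rw [Pi.single_eq_of_ne hij, exp_zero, one_mul]
    exact hC.valuation_updateCol_apply_le_one (fun i => (hb i).le) j i k

lemma exists_diagX_mul_isCongrOne {g : Matrix ι ι (Kt F)} (hg : g.det ≠ 0) :
    ∃ (a : ι → ℤ) (C : Matrix ι ι F[X]),
      IsCongrOne Valued.v (diagX F a * g * C.map (polyK F)) ∧ OneLEFirstMin (diagX F a * g) := by
  have hdet (a : ι → ℤ) : Valued.v (diagX F a * g).det = exp (∑ i, a i + log (Valued.v g.det)) := by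
    rw [det_mul, map_mul, valuation_det_diagX, WithZero.exp_add, exp_log (by simpa using hg)]
  obtain ⟨_, ⟨a, ha, rfl⟩, hmax⟩ := Int.exists_greatest_of_bdd
    (P := fun s => ∃ a : ι → ℤ, LastMinLEOne (diagX F a * g) ∧ ∑ i, a i = s)
    ⟨-log (Valued.v g.det), by
      rintro _ ⟨a, ha, rfl⟩
      have hle := ha.valuation_det_le_one
      rw [hdet, ← exp_zero, exp_le_exp] at hle
      lia⟩
    ((exists_lastMinLEOne_diagX_mul g).imp' _ fun a ha => ⟨a, ha, rfl⟩)
  obtain ⟨C, hC⟩ := ha.exists_isCongrOne fun h0 => by simpa [h0] using hdet a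
  refine ⟨a, C, hC, by_contra fun hshort => ?_⟩
  obtain ⟨j, hj⟩ := hC.exists_lastMinLEOne_diagX_mul hshort
  rw [← mul_assoc, ← diagX_add] at hj
  simpa [Finset.sum_add_distrib] using hmax _ ⟨_, hj, rfl⟩

lemma image_lattice_eq_lattice_diagX_mul {d : ℕ} (a : Fin d → ℤ)
    (g : Matrix (Fin d) (Fin d) (Kt F)) :
    (fun w i => Kx F ^ a i * w i) '' lattice F g = lattice F (diagX F a * g) := by
  have hact : (fun (w : Fin d → Kt F) i => Kx F ^ a i * w i) = (diagX F a).mulVec :=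
    funext₂ fun w i => by rw [diagX, mulVec_diagonal]
  rw [hact]
  ext u
  constructor
  · rintro ⟨_, ⟨b, rfl⟩, rfl⟩
    exact ⟨b, mulVec_mulVec _ _ _⟩
  · rintro ⟨b, rfl⟩
    exact ⟨_, ⟨b, rfl⟩, mulVec_mulVec _ _ _⟩

end Lattice

section WellRounded

variable {F : Type} [Field F] [Fintype F] {d : ℕ}

lemma one_lt_cast_card : (1 : ℝ) < Fintype.card F := mod_cast Fintype.one_lt_card

lemma Kabs_le_one_iff {f : Kt F} : Kabs F f ≤ 1 ↔ Valued.v f ≤ 1 := by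
  rcases eq_or_ne f 0 with rfl | hf
  · simp [Kabs]
  · rw [Kabs, if_neg hf, zpow_le_one_iff_right₀ one_lt_cast_card, valuation_eq_exp_neg_order hf,
      ← exp_zero, exp_le_exp]

lemma Kabs_lt_one_iff {f : Kt F} : Kabs F f < 1 ↔ Valued.v f < 1 := by
  rcases eq_or_ne f 0 with rfl | hf
  · simp [Kabs]
  · rw [Kabs, if_neg hf, zpow_lt_one_iff_right₀ one_lt_cast_card, valuation_eq_exp_neg_order hf,
      ← exp_zero, exp_lt_exp]

lemma Kabs_eq_one_iff {f : Kt F} : Kabs F f = 1 ↔ Valued.v f = 1 := by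
  rw [eq_iff_le_not_lt, eq_iff_le_not_lt, Kabs_le_one_iff, Kabs_lt_one_iff]

lemma Kabs_le_vnorm (w : Fin d → Kt F) (i : Fin d) : Kabs F (w i) ≤ vnorm F w :=
  le_ciSup (f := fun i => Kabs F (w i)) (Set.finite_range _).bddAbove i

lemma vnorm_eq_one {w : Fin d → Kt F} (hw : ∀ i, Valued.v (w i) ≤ 1) {i : Fin d}
    (hi : Valued.v (w i) = 1) : vnorm F w = 1 :=
  le_antisymm (Real.iSup_le (fun k => Kabs_le_one_iff.2 (hw k)) zero_le_one)
    ((Kabs_eq_one_iff.2 hi).ge.trans (Kabs_le_vnorm w i))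

lemma OneLEFirstMin.one_le_vnorm {h : Matrix (Fin d) (Fin d) (Kt F)} (hh : OneLEFirstMin h)
    {w : Fin d → Kt F} (hw : w ∈ lattice F h) (hw0 : w ≠ 0) : 1 ≤ vnorm F w := by
  obtain ⟨b, rfl⟩ := hw
  contrapose! hw0
  have hb : b = 0 := hh b fun i => Kabs_lt_one_iff.1 ((Kabs_le_vnorm _ i).trans_lt hw0)
  simp only [hb, Pi.zero_apply, map_zero]
  exact mulVec_zero h

lemma OneLEFirstMin.isWellRounded_lattice [NeZero d] {h : Matrix (Fin d) (Fin d) (Kt F)}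
    (hh : OneLEFirstMin h) {C : Matrix (Fin d) (Fin d) F[X]}
    (hC : IsCongrOne Valued.v (h * C.map (polyK F))) : IsWellRounded F (lattice F h) := by
  let w : Fin d → Fin d → Kt F := (h * C.map (polyK F)).col
  have hmem (j : Fin d) : w j ∈ lattice F h := ⟨C.col j, rfl⟩
  have hnorm (j : Fin d) : vnorm F (w j) = 1 :=
    vnorm_eq_one (fun i => hC.valuation_apply_le_one i j) (hC.valuation_diag_eq_one j)
  have hlin : LinearIndependent (Kt F) w := by
    refine linearIndependent_cols_of_det_ne_zero fun h0 => ?_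
    simpa [h0, -det_mul] using hC.valuation_det_eq_one
  have hell : ell F (lattice F h) = 1 := by
    refine IsLeast.csInf_eq ⟨⟨w 0, hmem 0, hlin.ne_zero 0, hnorm 0⟩, ?_⟩
    rintro _ ⟨u, hu, hu0, rfl⟩
    exact hh.one_le_vnorm hu hu0
  exact ⟨w, hmem, hlin, fun j => by rw [hnorm, hell]⟩

end WellRounded

/-- For every unimodular lattice `Λ ⊆ K̃^d` there is an integer vector
`a ∈ ℤ^d` with `a₁ + … + a_d = 0` such that `diag(x^{a₁},…,x^{a_d})·Λ` is well rounded. -/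
theorem integer_diagonal_wellRounded {d : ℕ} (hd : 2 ≤ d)
    (g : Matrix (Fin d) (Fin d) (Kt Fq)) (hg : Kabs Fq g.det = 1) :
    ∃ a : Fin d → ℤ, ∑ i, a i = 0 ∧
      IsWellRounded Fq ((fun v i => Kx Fq ^ a i * v i) '' lattice Fq g) := by
  have : NeZero d := ⟨by lia⟩
  have hgdet : Valued.v g.det = 1 := Kabs_eq_one_iff.1 hg
  have hg0 : g.det ≠ 0 := fun h0 => by simp [h0] at hgdet
  obtain ⟨a, C, hC, ha⟩ := exists_diagX_mul_isCongrOne hg0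
  refine ⟨a, ?_, ?_⟩
  · have hdet := ha.valuation_det_eq_one hC
    rwa [det_mul, map_mul, valuation_det_diagX, hgdet, mul_one, exp_eq_one] at hdet
  · rw [image_lattice_eq_lattice_diagX_mul]
    exact ha.isWellRounded_lattice hC
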